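/- arXiv:1703.03181 — 2 statements merged into one kernel-verified Lean document; each statement's English description precedes it below -/
import Mathlib

section
/- (Edwards' duality theorem.) Let φ : X → ℝ be a lower semicontinuous function and let z ∈ X. Then sup{ ψ(z) : ψ ∈ S, ψ ≤ φ on X } = inf{ ∫_X φ dμ : μ ∈ J_z(S) }. -/
/-!
The inequality `≤` is integration of `ψ ≤ φ` against a Jensen measure. For `≥`, every real `q` that
bounds the values `ψ z` of the minorants `ψ ∈ S` of `φ` must be shown to dominate `∫ φ dμ` for some
Jensen measure `μ`. In `C(X, ℝ)`, let `C` be the convex cone of those `h` such that, for some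
`t ≥ 0`, the function `h + t φ` has a minorant in `S` with value at least `t q` at `z`. If `-1` were
in `C`, then dividing by `t` would give a minorant of `φ` in `S` with value at least `q + 1 / t`
at `z`. Hence `-1 ∉ C`, and the M. Riesz extension theorem yields a linear functional `Λ` that is
nonnegative on `C` and satisfies `Λ 1 = 1`. The cone contains
* every `h ≥ 0`, so `Λ` is integration against a regular probability measure `μ`;
* every `u - u z` with `u ∈ S`, so `μ` is a Jensen measure with barycenter `z`;
* every `q - f` with `f ≤ φ` continuous, so `∫ f dμ ≤ q` for such `f`.

By the Vitali–Carathéodory theorem an integrable `ψ ≤ φ` is approximated in integral by an upper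
semicontinuous `g < φ`, and a continuous function fits between `g` and `φ`. So the last bound
extends to all integrable minorants of `φ`, and then to `φ` itself. Putting the lower
semicontinuous `φ` directly into the cone makes weak-star compactness of the set of Jensen measures
unnecessary.
-/

open MeasureTheory Topology Filter
open scoped ENNReal

/-- The nonnegative part of an extended real number, as an element of `ℝ≥0∞`. -/
noncomputable def erealToENNReal (a : EReal) : ℝ≥0∞ :=
  if a = ⊤ then ⊤ else ENNReal.ofReal a.toReal

/-- The (upper) integral of a function with values in `[-∞, ∞]`, defined as the
difference of the lower integrals of its positive and negative parts. -/
noncomputable def erealIntegral {α : Type*} [MeasurableSpace α]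
    (μ : Measure α) (u : α → EReal) : EReal :=
  ((∫⁻ x, erealToENNReal (u x) ∂μ : ℝ≥0∞) : EReal) -
    ((∫⁻ x, erealToENNReal (-(u x)) ∂μ : ℝ≥0∞) : EReal)

/-- `μ` is a Jensen measure with barycenter `z` with respect to the family `S` of
(continuous real-valued) functions: a Borel probability measure such that
`u z ≤ ∫ u dμ` for every `u ∈ S`. -/
def IsJensenMeasure {α : Type*} [MeasurableSpace α]
    (S : Set (α → ℝ)) (z : α) (μ : Measure α) : Prop :=
  IsProbabilityMeasure μ ∧ ∀ u ∈ S, u z ≤ ∫ x, u x ∂μ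

/-- A function `u : α → [-∞, ∞)` is `S`-subharmonic if it is upper semicontinuous
and satisfies `u z ≤ ∫ u dμ` for every `z` and every Jensen measure `μ` with
barycenter `z` w.r.t. `S`. -/
def IsSSubharmonic {α : Type*} [TopologicalSpace α] [MeasurableSpace α]
    (S : Set (α → ℝ)) (u : α → EReal) : Prop :=
  UpperSemicontinuous u ∧ (∀ x, u x ≠ ⊤) ∧
    ∀ z : α, ∀ μ : Measure α, IsJensenMeasure S z μ → u z ≤ erealIntegral μ u

section ERealIntegral

variable {α : Type*} [MeasurableSpace α] {μ : Measure α}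

lemma erealIntegral_mono {u v : α → EReal} (h : u ≤ v) :
    erealIntegral μ u ≤ erealIntegral μ v := by
  refine EReal.sub_le_sub ?_ ?_ <;>
    refine EReal.coe_ennreal_le_coe_ennreal_iff.2 (lintegral_mono fun x => ?_)
  · exact EReal.toENNReal_le_toENNReal (h x)
  · exact EReal.toENNReal_le_toENNReal (EReal.neg_le_neg_iff.2 (h x))

lemma erealIntegral_coe_of_integrable {f : α → ℝ} (hf : Integrable f μ) :
    erealIntegral μ (fun x => (f x : EReal)) = (∫ x, f x ∂μ : ℝ) := by
  have hpos : ∫⁻ x, ENNReal.ofReal (f x) ∂μ ≠ ⊤ := hf.lintegral_lt_top.ne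
  have hneg : ∫⁻ x, ENNReal.ofReal (-f x) ∂μ ≠ ⊤ := hf.neg.lintegral_lt_top.ne
  rw [integral_eq_lintegral_pos_part_sub_lintegral_neg_part hf, EReal.coe_sub,
    EReal.coe_ennreal_toReal hpos, EReal.coe_ennreal_toReal hneg]
  simp only [erealIntegral, erealToENNReal, ← EReal.coe_neg, EReal.coe_ne_top, if_false,
    EReal.toReal_coe]

lemma IsJensenMeasure.le_erealIntegral {S : Set (α → ℝ)} {z : α} (hμ : IsJensenMeasure S z μ)
    {ψ φ : α → ℝ} (hψ : ψ ∈ S) (hψi : Integrable ψ μ) (hψφ : ∀ x, ψ x ≤ φ x) :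
    (ψ z : EReal) ≤ erealIntegral μ (fun x => (φ x : EReal)) :=
  calc (ψ z : EReal) ≤ (∫ x, ψ x ∂μ : ℝ) := EReal.coe_le_coe_iff.2 (hμ.2 ψ hψ)
    _ = erealIntegral μ (fun x => (ψ x : EReal)) := (erealIntegral_coe_of_integrable hψi).symm
    _ ≤ erealIntegral μ (fun x => (φ x : EReal)) :=
      erealIntegral_mono fun x => EReal.coe_le_coe_iff.2 (hψφ x)

end ERealIntegral

lemma integrable_of_forall_integral_le {α : Type*} [MeasurableSpace α] {μ : Measure α}
    [IsFiniteMeasure μ] {φ g : α → ℝ} {q : ℝ} (hφ : AEStronglyMeasurable φ μ)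
    (hg : Integrable g μ) (hgφ : g ≤ φ)
    (hq : ∀ ψ : α → ℝ, Integrable ψ μ → ψ ≤ φ → ∫ x, ψ x ∂μ ≤ q) : Integrable φ μ := by
  have hbound : ∫⁻ x, ENNReal.ofReal (φ x - g x) ∂μ ≤ ENNReal.ofReal (q - ∫ x, g x ∂μ) := by
    rw [lintegral_eq_nnreal]
    refine iSup₂_le fun s hs => ?_
    have hsi : Integrable (fun x => (s x : ℝ)) μ :=
      (s.map ((↑) : NNReal → ℝ)).integrable_of_isFiniteMeasure
    have hsφ : (fun x => g x + s x) ≤ φ := fun x => by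
      have hsx : ENNReal.ofReal (s x) ≤ ENNReal.ofReal (φ x - g x) := by simpa using hs x
      linarith [(ENNReal.ofReal_le_ofReal_iff (sub_nonneg.2 (hgφ x))).1 hsx]
    have hint : ∫ x, g x ∂μ + ∫ x, (s x : ℝ) ∂μ ≤ q :=
      (integral_add hg hsi).symm.trans_le (hq _ (hg.add hsi) hsφ)
    rw [← SimpleFunc.lintegral_eq_lintegral]
    exact (lintegral_coe_eq_integral _ hsi).trans_le (ENNReal.ofReal_le_ofReal (by linarith))
  have hdiff : Integrable (φ - g) μ :=
    (lintegral_ofReal_ne_top_iff_integrable (hφ.sub hg.aestronglyMeasurable)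
      (Eventually.of_forall fun x => sub_nonneg.2 (hgφ x))).1
      (hbound.trans_lt ENNReal.ofReal_lt_top).ne
  simpa using hdiff.add hg

lemma exists_continuous_between {α : Type*} [TopologicalSpace α] [NormalSpace α]
    [ParacompactSpace α] {g h : α → EReal} (hg : UpperSemicontinuous g)
    (hh : LowerSemicontinuous h) (hgh : ∀ x, g x < h x) :
    ∃ f : C(α, ℝ), ∀ x, g x < f x ∧ f x < h x := by
  have hconvex (x : α) : Convex ℝ {c : ℝ | g x < c ∧ c < h x} :=
    (Set.ordConnected_Ioo.preimage_mono EReal.coe_strictMono.monotone).convex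
  refine exists_continuous_forall_mem_convex_of_local_const hconvex fun x => ?_
  obtain ⟨c, hgc, hch⟩ := EReal.lt_iff_exists_real_btwn.1 (hgh x)
  exact ⟨c, (hg x c hgc).and (hh x c hch)⟩

section CompactSpace

variable {α : Type*} [TopologicalSpace α] [CompactSpace α] [MeasurableSpace α]

lemma integrable_of_continuous [OpensMeasurableSpace α] {μ : Measure α}
    [IsFiniteMeasureOnCompacts μ] {f : α → ℝ} (hf : Continuous f) : Integrable f μ :=
  hf.integrable_of_hasCompactSupport (HasCompactSupport.of_compactSpace f)

variable [BorelSpace α]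

section WeaklyRegular

variable [NormalSpace α] {μ : Measure α} [IsFiniteMeasure μ] [μ.WeaklyRegular] {φ : α → ℝ}

lemma exists_continuous_lt_integral_lt_add (hφ : LowerSemicontinuous φ) {ψ : α → ℝ}
    (hψ : Integrable ψ μ) (hψφ : ψ ≤ φ) {ε : ℝ} (hε : 0 < ε) :
    ∃ f : C(α, ℝ), (∀ x, f x < φ x) ∧ ∫ x, ψ x ∂μ < ∫ x, f x ∂μ + ε := by
  obtain ⟨g, hgψ, hg, hgi, hg_bot, hψg⟩ := exists_upperSemicontinuous_lt_integral_gt ψ hψ hε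
  have hφ' : LowerSemicontinuous fun x => (φ x : EReal) :=
    continuous_coe_real_ereal.comp_lowerSemicontinuous hφ EReal.coe_strictMono.monotone
  obtain ⟨f, hf⟩ := exists_continuous_between hg hφ' fun x =>
    (hgψ x).trans_le (EReal.coe_le_coe_iff.2 (hψφ x))
  have hgf : ∫ x, (g x).toReal ∂μ ≤ ∫ x, f x ∂μ := by
    refine integral_mono_ae hgi (integrable_of_continuous f.continuous) ?_
    filter_upwards [hg_bot] with x hx
    exact EReal.toReal_le_toReal (hf x).1.le hx.ne' (EReal.coe_ne_top _)
  exact ⟨f, fun x => EReal.coe_lt_coe_iff.1 (hf x).2, by linarith⟩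

lemma integrable_and_integral_le_of_lowerSemicontinuous (hφ : LowerSemicontinuous φ) {q : ℝ}
    (hq : ∀ f : C(α, ℝ), (∀ x, f x ≤ φ x) → ∫ x, f x ∂μ ≤ q) :
    Integrable φ μ ∧ ∫ x, φ x ∂μ ≤ q := by
  have hminorant (ψ : α → ℝ) (hψ : Integrable ψ μ) (hψφ : ψ ≤ φ) : ∫ x, ψ x ∂μ ≤ q := by
    refine le_of_forall_pos_le_add fun ε hε => ?_
    obtain ⟨f, hfφ, hψf⟩ := exists_continuous_lt_integral_lt_add hφ hψ hψφ hε
    linarith [hq f fun x => (hfφ x).le]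
  obtain ⟨m, hm⟩ :=
    LowerSemicontinuousOn.bddBelow_of_isCompact isCompact_univ (hφ.lowerSemicontinuousOn Set.univ)
  have hφi : Integrable φ μ :=
    integrable_of_forall_integral_le hφ.measurable.aestronglyMeasurable (integrable_const m)
      (fun x => hm (Set.mem_image_of_mem φ (Set.mem_univ x))) hminorant
  exact ⟨hφi, hminorant φ hφi le_rfl⟩

end WeaklyRegular

lemma exists_regular_isProbabilityMeasure_integral_eq [T2Space α] (Λ : C(α, ℝ) →ₗ[ℝ] ℝ)
    (hone : Λ 1 = 1) (hpos : ∀ f, 0 ≤ f → 0 ≤ Λ f) :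
    ∃ μ : Measure α, IsProbabilityMeasure μ ∧ μ.Regular ∧ ∀ f : C(α, ℝ), ∫ x, f x ∂μ = Λ f := by
  let Λc : CompactlySupportedContinuousMap α ℝ →ₗ[ℝ] ℝ :=
    { toFun := fun f => Λ f.toContinuousMap
      map_add' := fun f g => Λ.map_add f.toContinuousMap g.toContinuousMap
      map_smul' := fun c f => Λ.map_smul c f.toContinuousMap }
  let P : CompactlySupportedContinuousMap α ℝ →ₚ[ℝ] ℝ :=
    PositiveLinearMap.mk₀ Λc fun f hf => hpos f.toContinuousMap hf
  have hP (f : C(α, ℝ)) : ∫ x, f x ∂(RealRMK.rieszMeasure P) = Λ f :=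
    RealRMK.integral_rieszMeasure P (CompactlySupportedContinuousMap.continuousMapEquiv f)
  refine ⟨RealRMK.rieszMeasure P, isProbabilityMeasure_iff_real.2 ?_, inferInstance, hP⟩
  simpa [hone] using hP 1

end CompactSpace

lemma exists_linearMap_eq_one_of_neg_notMem {E : Type*} [AddCommGroup E] [Module ℝ E]
    (C : PointedCone ℝ E) {e : E} (he : -e ∉ C) (hunit : ∀ y, ∃ c : ℝ, c • e + y ∈ C) :
    ∃ Λ : E →ₗ[ℝ] ℝ, Λ e = 1 ∧ ∀ x ∈ C, 0 ≤ Λ x := by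
  have hne : e ≠ 0 := by
    rintro rfl
    exact he (by simp)
  have hnonneg (c : ℝ) (hc : c • e ∈ C) : 0 ≤ c := by
    by_contra! hlt
    have hmem : (-c)⁻¹ • c • e ∈ C := C.smul_mem (inv_nonneg.2 (neg_nonneg.2 hlt.le)) hc
    rw [smul_smul, inv_neg, neg_mul, inv_mul_cancel₀ hlt.ne, neg_one_smul] at hmem
    exact he hmem
  let coord := LinearEquiv.coord ℝ E e hne
  obtain ⟨Λ, hΛ, hΛC⟩ := riesz_extension C ⟨Submodule.span ℝ {e}, coord⟩
    (fun x hx => hnonneg (coord x) (by rwa [LinearEquiv.coord_apply_smul]))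
    (fun y => (hunit y).imp' (fun c => ⟨c • e, Submodule.mem_span_singleton.2 ⟨c, rfl⟩⟩)
      fun _ hc => hc)
  exact ⟨Λ, (hΛ ⟨e, Submodule.mem_span_singleton_self e⟩).trans (LinearEquiv.coord_self ..), hΛC⟩

section MinorantCone

variable {α : Type*} [TopologicalSpace α]

/-- The cone of those `h ∈ C(α, ℝ)` for which some `h + t φ`, `t ≥ 0`, has a minorant in `S` whose
value at `z` is at least `t q`. Linear functionals that are nonnegative on it give the Jensen
measures `μ` with barycenter `z` and `∫ φ dμ ≤ q`. The factor `t` makes the condition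
homogeneous. -/
def minorantCone (S : PointedCone ℝ (α → ℝ)) (φ : α → ℝ) (z : α) (q : ℝ) :
    PointedCone ℝ C(α, ℝ) where
  carrier := {h | ∃ t : ℝ, 0 ≤ t ∧ ∃ ψ ∈ S, t * q ≤ ψ z ∧ ∀ x, ψ x ≤ h x + t * φ x}
  add_mem' := by
    rintro h₁ h₂ ⟨t₁, ht₁, ψ₁, hψ₁, hz₁, hle₁⟩ ⟨t₂, ht₂, ψ₂, hψ₂, hz₂, hle₂⟩
    refine ⟨t₁ + t₂, add_nonneg ht₁ ht₂, ψ₁ + ψ₂, S.add_mem hψ₁ hψ₂, ?_, fun x => ?_⟩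
    · rw [Pi.add_apply]
      linarith
    · rw [Pi.add_apply, ContinuousMap.add_apply]
      linarith [hle₁ x, hle₂ x]
  zero_mem' := ⟨0, le_rfl, 0, S.zero_mem, by simp, by simp⟩
  smul_mem' := by
    rintro ⟨c, hc⟩ h ⟨t, ht, ψ, hψ, hz, hle⟩
    refine ⟨c * t, mul_nonneg hc ht, c • ψ, S.smul_mem hc hψ, ?_, fun x => ?_⟩
    · exact (mul_assoc c t q).trans_le (mul_le_mul_of_nonneg_left hz hc)
    · calc c * ψ x ≤ c * (h x + t * φ x) := mul_le_mul_of_nonneg_left (hle x) hc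
        _ = c * h x + c * t * φ x := by ring

variable {S : PointedCone ℝ (α → ℝ)} {φ : α → ℝ} {z : α} {q : ℝ}

lemma mem_minorantCone_of_nonneg {h : C(α, ℝ)} (hh : 0 ≤ h) : h ∈ minorantCone S φ z q :=
  ⟨0, le_rfl, 0, S.zero_mem, by simp, fun x => by simpa using hh x⟩

lemma mem_minorantCone_of_mem {h : C(α, ℝ)} (hh : ⇑h ∈ S) (hz : 0 ≤ h z) :
    h ∈ minorantCone S φ z q :=
  ⟨0, le_rfl, h, hh, by simpa using hz, fun x => by simp⟩

variable (hconst : ∀ c : ℝ, (fun _ => c) ∈ S)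
include hconst

lemma smul_one_sub_mem_minorantCone {f : C(α, ℝ)} (hf : ∀ x, f x ≤ φ x) :
    q • 1 - f ∈ minorantCone S φ z q :=
  ⟨1, zero_le_one, _, hconst q, by simp, fun x => by simpa [sub_add] using hf x⟩

lemma neg_one_notMem_minorantCone (hq : ∀ ψ ∈ S, (∀ x, ψ x ≤ φ x) → ψ z ≤ q) :
    -1 ∉ minorantCone S φ z q := by
  rintro ⟨t, ht, ψ, hψ, hz, hle⟩
  have hle' (x : α) : ψ x + 1 ≤ t * φ x := by
    have := hle x
    rw [ContinuousMap.neg_apply, ContinuousMap.one_apply] at this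
    linarith
  rcases ht.eq_or_lt with rfl | ht
  · linarith [hle' z]
  · have hmem : t⁻¹ • (ψ + fun _ => 1) ∈ S :=
      S.smul_mem (inv_nonneg.2 ht.le) (S.add_mem hψ (hconst 1))
    have hval : t⁻¹ * (ψ z + 1) ≤ q := hq _ hmem fun x => (inv_mul_le_iff₀ ht).2 (hle' x)
    linarith [(inv_mul_le_iff₀ ht).1 hval]

lemma exists_linearMap_of_minorants_le [CompactSpace α]
    (hq : ∀ ψ ∈ S, (∀ x, ψ x ≤ φ x) → ψ z ≤ q) :
    ∃ Λ : C(α, ℝ) →ₗ[ℝ] ℝ, Λ 1 = 1 ∧ (∀ h, 0 ≤ h → 0 ≤ Λ h) ∧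
      (∀ u : C(α, ℝ), ⇑u ∈ S → u z ≤ Λ u) ∧ ∀ f : C(α, ℝ), (∀ x, f x ≤ φ x) → Λ f ≤ q := by
  have hunit (h : C(α, ℝ)) : ∃ c : ℝ, c • 1 + h ∈ minorantCone S φ z q :=
    ⟨‖h‖, mem_minorantCone_of_nonneg fun x => by
      simpa using neg_le_iff_add_nonneg'.1 (h.neg_norm_le_apply x)⟩
  obtain ⟨Λ, hone, hΛ⟩ := exists_linearMap_eq_one_of_neg_notMem (minorantCone S φ z q)
    (neg_one_notMem_minorantCone hconst hq) hunit
  refine ⟨Λ, hone, fun h hh => hΛ h (mem_minorantCone_of_nonneg hh), fun u hu => ?_,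
    fun f hf => ?_⟩
  · have hmem : u - u z • 1 ∈ minorantCone S φ z q := by
      refine mem_minorantCone_of_mem ?_ (by simp)
      convert S.add_mem hu (hconst (-u z)) using 1
      ext x
      simp [sub_eq_add_neg]
    simpa [hone] using hΛ _ hmem
  · simpa [hone] using hΛ _ (smul_one_sub_mem_minorantCone hconst hf)

end MinorantCone

section Duality

variable {α : Type*} [TopologicalSpace α] [CompactSpace α] [T2Space α] [MeasurableSpace α]
  [BorelSpace α]

lemma exists_isJensenMeasure_erealIntegral_le {S : PointedCone ℝ (α → ℝ)}
    (hS : ∀ f ∈ S, Continuous f) (hconst : ∀ c : ℝ, (fun _ => c) ∈ S) {φ : α → ℝ}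
    (hφ : LowerSemicontinuous φ) {z : α} {q : ℝ}
    (hq : ∀ ψ ∈ S, (∀ x, ψ x ≤ φ x) → ψ z ≤ q) :
    ∃ μ : Measure α, IsJensenMeasure (S : Set (α → ℝ)) z μ ∧
      erealIntegral μ (fun x => (φ x : EReal)) ≤ q := by
  obtain ⟨Λ, hone, hpos, hΛS, hΛφ⟩ := exists_linearMap_of_minorants_le hconst hq
  obtain ⟨μ, hμ, hreg, hμΛ⟩ := exists_regular_isProbabilityMeasure_integral_eq Λ hone hpos
  obtain ⟨hφi, hφq⟩ := integrable_and_integral_le_of_lowerSemicontinuous (μ := μ) hφ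
    fun f hf => (hμΛ f).trans_le (hΛφ f hf)
  refine ⟨μ, ⟨hμ, fun u hu => ?_⟩, ?_⟩
  · exact (hΛS ⟨u, hS u hu⟩ hu).trans_eq (hμΛ _).symm
  · rw [erealIntegral_coe_of_integrable hφi]
    exact EReal.coe_le_coe_iff.2 hφq

theorem edwards_duality_general (S : PointedCone ℝ (α → ℝ)) (hS : ∀ f ∈ S, Continuous f)
    (hconst : ∀ c : ℝ, (fun _ => c) ∈ S) (φ : α → ℝ) (hφ : LowerSemicontinuous φ) (z : α) :
    sSup {y : EReal | ∃ ψ ∈ S, (∀ x, ψ x ≤ φ x) ∧ y = (ψ z : EReal)} =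
      sInf {y : EReal | ∃ μ : Measure α, IsJensenMeasure (S : Set (α → ℝ)) z μ ∧
        y = erealIntegral μ (fun x => (φ x : EReal))} := by
  apply le_antisymm
  · refine sSup_le ?_
    rintro _ ⟨ψ, hψ, hψφ, rfl⟩
    refine le_sInf ?_
    rintro _ ⟨μ, hμ, rfl⟩
    have : IsProbabilityMeasure μ := hμ.1
    exact hμ.le_erealIntegral hψ (integrable_of_continuous (hS ψ hψ)) hψφ
  · refine EReal.le_of_forall_lt_iff_le.1 fun q hq => ?_
    have hminorant : ∀ ψ ∈ S, (∀ x, ψ x ≤ φ x) → ψ z ≤ q := fun ψ hψ hψφ =>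
      EReal.coe_le_coe_iff.1 (hq.le.trans' (le_sSup ⟨ψ, hψ, hψφ, rfl⟩))
    obtain ⟨μ, hμ, hμq⟩ := exists_isJensenMeasure_erealIntegral_le hS hconst hφ hminorant
    exact sInf_le_of_le ⟨μ, hμ, rfl⟩ hμq

end Duality

/-- Edwards' duality theorem: for a lower semicontinuous `φ : X → ℝ` and `z ∈ X`,
`sup { ψ z : ψ ∈ S, ψ ≤ φ } = inf { ∫ φ dμ : μ ∈ J_z(S) }`. -/
theorem edwards_duality {n : ℕ}
    (X : Set (Fin n → ℂ)) (hX : IsCompact X)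
    (S : Set (↥X → ℝ)) (hS : ∀ f ∈ S, Continuous f)
    (hconst : ∀ c : ℝ, (fun _ => c) ∈ S)
    (hadd : ∀ u ∈ S, ∀ v ∈ S, u + v ∈ S)
    (hsmul : ∀ u ∈ S, ∀ t : ℝ, 0 ≤ t → t • u ∈ S)
    (hmax : ∀ u ∈ S, ∀ v ∈ S, (fun x => max (u x) (v x)) ∈ S)
    (φ : ↥X → ℝ) (hφ : LowerSemicontinuous φ) (z : ↥X) :
    sSup {y : EReal | ∃ ψ ∈ S, (∀ x, ψ x ≤ φ x) ∧ y = ((ψ z : ℝ) : EReal)} =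
      sInf {y : EReal | ∃ μ : Measure ↥X, IsJensenMeasure S z μ ∧
        y = erealIntegral μ (fun x => ((φ x : ℝ) : EReal))} := by
  have : CompactSpace X := isCompact_iff_compactSpace.1 hX
  let cone : PointedCone ℝ (X → ℝ) :=
    { carrier := S
      add_mem' := fun {u v} hu hv => hadd u hu v hv
      zero_mem' := hconst 0
      smul_mem' := fun t u hu => hsmul u hu t t.2 }
  exact edwards_duality_general cone hS hconst φ hφ z
end

section
/- Suppose there exists a function ψ : Ω̄ → [-∞, ∞) that is S-subharmonic on Ω̄, satisfies ψ ≤ 0 on Ω̄ and ψ < 0 on Ω, and is an exhaustion for Ω in the sense that for every c < 0 the sublevel set {x ∈ Ω̄ : ψ(x) < c} is relatively compact in Ω. Then for every z ∈ ∂Ω and every μ ∈ J_z(S) one has μ(Ω) = 0, i.e., μ is supported on ∂Ω. -/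
/-!
At a boundary point `z` the exhaustion property forces `ψ z = 0`, so the Jensen inequality for `ψ`
at `z` reads `0 ≤ ∫ ψ dμ`. Since `ψ ≤ 0`, this is only possible if `ψ = 0` almost everywhere for
`μ`, and the set `Ω`, on which `ψ < 0`, is `μ`-null.
-/

open MeasureTheory Topology Filter
open scoped ENNReal

section Integral

variable {α : Type*} [MeasurableSpace α] {μ : Measure α} {u : α → EReal}

theorem erealToENNReal_eq_toENNReal (a : EReal) : erealToENNReal a = a.toENNReal := rfl

theorem erealIntegral_of_ae_nonpos (hu : ∀ᵐ x ∂μ, u x ≤ 0) :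
    erealIntegral μ u = -((∫⁻ x, (-u x).toENNReal ∂μ : ℝ≥0∞) : EReal) := by
  have hpos : ∫⁻ x, (u x).toENNReal ∂μ = 0 :=
    lintegral_eq_zero_of_ae_eq_zero (hu.mono fun _ => EReal.toENNReal_of_nonpos)
  simp only [erealIntegral, erealToENNReal_eq_toENNReal, hpos, EReal.coe_ennreal_zero, zero_sub]

theorem erealIntegral_nonneg_iff_of_ae_nonpos (hum : AEMeasurable u μ)
    (hu : ∀ᵐ x ∂μ, u x ≤ 0) : 0 ≤ erealIntegral μ u ↔ u =ᵐ[μ] 0 := by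
  have hneg : AEMeasurable (fun x => (-u x).toENNReal) μ := hum.neg.ereal_toENNReal
  calc 0 ≤ erealIntegral μ u
      ↔ ∫⁻ x, (-u x).toENNReal ∂μ = 0 := by
        rw [erealIntegral_of_ae_nonpos hu, EReal.le_neg, neg_zero, ← EReal.coe_ennreal_zero,
          EReal.coe_ennreal_le_coe_ennreal_iff, nonpos_iff_eq_zero]
    _ ↔ ∀ᵐ x ∂μ, 0 ≤ u x := by
        simp only [lintegral_eq_zero_iff' hneg, EventuallyEq, Pi.zero_apply,
          EReal.toENNReal_eq_zero_iff, EReal.neg_le_zero]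
    _ ↔ u =ᵐ[μ] 0 :=
        ⟨fun h => by filter_upwards [hu, h] with x using le_antisymm, fun h => h.symm.le⟩

end Integral

theorem nonneg_of_notMem_of_sublevel_subset {α : Type*} {ψ : α → EReal} {Ω : Set α}
    (hexh : ∀ c : ℝ, c < 0 → {x | ψ x < c} ⊆ Ω) {z : α} (hz : z ∉ Ω) : 0 ≤ ψ z := by
  by_contra! hneg
  obtain ⟨c, hzc, hc⟩ := EReal.lt_iff_exists_real_btwn.1 hneg
  exact hz (hexh c (EReal.coe_neg'.1 hc) hzc)

section Jensen

variable {X : Type*} [TopologicalSpace X] [MeasurableSpace X] [OpensMeasurableSpace X]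
  {S : Set (X → ℝ)} {ψ : X → EReal} {z : X} {μ : Measure X}

theorem IsSSubharmonic.ae_eq_zero_of_ae_nonpos (hψ : IsSSubharmonic S ψ)
    (hψ0 : ∀ᵐ x ∂μ, ψ x ≤ 0) (hz : 0 ≤ ψ z) (hμ : IsJensenMeasure S z μ) : ψ =ᵐ[μ] 0 := by
  obtain ⟨husc, -, hjensen⟩ := hψ
  exact (erealIntegral_nonneg_iff_of_ae_nonpos husc.measurable.aemeasurable hψ0).1
    (hz.trans (hjensen z μ hμ))

theorem jensen_measure_supported_on_boundary_of_exhaustion_general {Ω : Set X}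
    (hψ : IsSSubharmonic S ψ) (hψ0 : ∀ x, ψ x ≤ 0) (hψneg : ∀ x ∈ Ω, ψ x < 0)
    (hexh : ∀ c : ℝ, c < 0 → {x | ψ x < c} ⊆ Ω) (hz : z ∉ Ω) (hμ : IsJensenMeasure S z μ) :
    μ Ω = 0 := by
  have hae : ∀ᵐ x ∂μ, ψ x = 0 :=
    hψ.ae_eq_zero_of_ae_nonpos (ae_of_all μ hψ0)
      (nonneg_of_notMem_of_sublevel_subset hexh hz) hμ
  exact measure_mono_null (fun x hx => (hψneg x hx).ne) (ae_iff.1 hae)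

end Jensen

/-- If the bounded domain `Ω` admits a negative `S`-subharmonic exhaustion function
on `Ω̄`, then every Jensen measure with barycenter on `∂Ω` is supported on `∂Ω`. -/
theorem jensen_measure_supported_on_boundary_of_exhaustion {n : ℕ}
    (Ω : Set (Fin n → ℂ)) (hΩo : IsOpen Ω) (hΩc : IsConnected Ω)
    (hΩb : Bornology.IsBounded Ω)
    (S : Set (↥(closure Ω) → ℝ)) (hS : ∀ f ∈ S, Continuous f)
    (ψ : ↥(closure Ω) → EReal) (hψ : IsSSubharmonic S ψ)
    (hψ0 : ∀ x, ψ x ≤ 0)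
    (hψneg : ∀ x : ↥(closure Ω), (x : Fin n → ℂ) ∈ Ω → ψ x < 0)
    (hexh : ∀ c : ℝ, c < 0 →
      IsCompact (closure {x : Fin n → ℂ | ∃ hx : x ∈ closure Ω, ψ ⟨x, hx⟩ < (c : EReal)}) ∧
      closure {x : Fin n → ℂ | ∃ hx : x ∈ closure Ω, ψ ⟨x, hx⟩ < (c : EReal)} ⊆ Ω) :
    ∀ z : ↥(closure Ω), (z : Fin n → ℂ) ∈ frontier Ω →
      ∀ μ : Measure ↥(closure Ω), IsJensenMeasure S z μ →
        μ {x : ↥(closure Ω) | (x : Fin n → ℂ) ∈ Ω} = 0 := by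
  intro z hz μ hμ
  have hzΩ : (z : Fin n → ℂ) ∉ Ω := (hΩo.frontier_eq ▸ hz).2
  exact jensen_measure_supported_on_boundary_of_exhaustion_general hψ hψ0 hψneg
    (fun c hc x hx => (hexh c hc).2 (subset_closure ⟨x.2, hx⟩)) hzΩ hμ
end
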